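/- Let G be a strongly connected directed graph on n vertices with self-loops at every vertex, F_q a finite field with q ≥ n² elements, let the entries A_{uv} for edges (v,u) of G and the coordinates of x be chosen independently and uniformly at random from F_q (other entries of A being zero), and fix r. Then the probability that the n×n Hankel matrix H_n with entries ((A^{a+b-2} x)_r)_{a,b} is invertible is at least 1 − n²/q. -/

import Mathlib

open Matrix

/-- The matrix built from a weight assignment `w` on the edges of the graph `E`
(`E v u` meaning there is an edge from `v` to `u`): the entry `A u v` is the weight
of the edge `(v, u)` if it exists, and `0` otherwise. -/
def graphMat {n : ℕ} {F : Type*} [Field F] (E : Fin n → Fin n → Prop) [DecidableRel E]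
    (w : {p : Fin n × Fin n // E p.1 p.2} → F) : Matrix (Fin n) (Fin n) F :=
  Matrix.of fun u v => if h : E v u then w ⟨(v, u), h⟩ else 0

section Hankel

variable {n : ℕ} {R S : Type*} [CommRing R] [CommRing S]

/-- The observability matrix of `A` at the coordinate `r`: its rows are the `r`-th rows of the
powers of `A`. -/
def obsMat (A : Matrix (Fin n) (Fin n) R) (r : Fin n) : Matrix (Fin n) (Fin n) R :=
  Matrix.of fun a v => (A ^ (a : ℕ)) r v

/-- The Krylov matrix of `A` and `x`: its columns are the vectors `A ^ b *ᵥ x`. -/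
def krylovMat (A : Matrix (Fin n) (Fin n) R) (x : Fin n → R) : Matrix (Fin n) (Fin n) R :=
  Matrix.of fun v b => (A ^ (b : ℕ) *ᵥ x) v

/-- The Hankel matrix of the sequence of `r`-th coordinates of `A ^ k *ᵥ x`. -/
def hankelMat (A : Matrix (Fin n) (Fin n) R) (x : Fin n → R) (r : Fin n) :
    Matrix (Fin n) (Fin n) R :=
  Matrix.of fun a b => (A ^ ((a : ℕ) + (b : ℕ)) *ᵥ x) r

theorem hankelMat_eq_mul (A : Matrix (Fin n) (Fin n) R) (x : Fin n → R) (r : Fin n) :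
    hankelMat A x r = obsMat A r * krylovMat A x := by
  ext a b
  simp only [hankelMat, obsMat, krylovMat, Matrix.of_apply, Matrix.mul_apply, pow_add]
  rw [← Matrix.mulVec_mulVec]
  rfl

theorem map_pow_mulVec (f : R →+* S) (A : Matrix (Fin n) (Fin n) R) (x : Fin n → R) (k : ℕ)
    (i : Fin n) : f ((A ^ k *ᵥ x) i) = ((A.map f) ^ k *ᵥ (f ∘ x)) i := by
  rw [RingHom.map_mulVec, ← RingHom.mapMatrix_apply, ← RingHom.mapMatrix_apply, map_pow]

theorem map_det_obsMat (f : R →+* S) (A : Matrix (Fin n) (Fin n) R) (r : Fin n) :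
    f (obsMat A r).det = (obsMat (A.map f) r).det := by
  rw [RingHom.map_det]
  congr 1
  ext a v
  rw [← RingHom.mapMatrix_apply, obsMat, obsMat, Matrix.of_apply, ← map_pow]
  rfl

theorem map_det_krylovMat (f : R →+* S) (A : Matrix (Fin n) (Fin n) R) (x : Fin n → R) :
    f (krylovMat A x).det = (krylovMat (A.map f) (f ∘ x)).det := by
  rw [RingHom.map_det]
  congr 1
  ext v b
  exact map_pow_mulVec f A x b v

theorem map_det_hankelMat (f : R →+* S) (A : Matrix (Fin n) (Fin n) R) (x : Fin n → R)
    (r : Fin n) : f (hankelMat A x r).det = (hankelMat (A.map f) (f ∘ x) r).det := by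
  rw [RingHom.map_det]
  congr 1
  ext a b
  exact map_pow_mulVec f A x (a + b) r

theorem pow_mulVec_of_eigenvector {A : Matrix (Fin n) (Fin n) R} {y : Fin n → R} {c : R}
    (h : A *ᵥ y = c • y) (k : ℕ) : A ^ k *ᵥ y = c ^ k • y := by
  induction k with
  | zero => simp
  | succ k ih =>
    rw [pow_succ, ← Matrix.mulVec_mulVec, h, Matrix.mulVec_smul, ih, smul_smul, pow_succ, mul_comm]

/-- If `A` has distinct eigenvalues, each with an eigenvector visible at the coordinate `r`, then
the observability matrix at `r` is nonsingular. -/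
theorem det_obsMat_ne_zero [IsDomain R] {A : Matrix (Fin n) (Fin n) R} {r : Fin n} {d : Fin n → R}
    (hd : Function.Injective d)
    (h : ∀ v, ∃ y : Fin n → R, A *ᵥ y = d v • y ∧ y r ≠ 0) : (obsMat A r).det ≠ 0 := by
  choose y hy hyr using h
  have key : obsMat A r * Matrix.of (fun u v => y v u)
      = (Matrix.vandermonde d)ᵀ * Matrix.diagonal (fun v => y v r) := by
    ext a v
    rw [Matrix.mul_diagonal, Matrix.transpose_apply, Matrix.vandermonde_apply]
    exact congrFun (pow_mulVec_of_eigenvector (hy v) a) r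
  intro h0
  have hdet := congrArg Matrix.det key
  rw [Matrix.det_mul, h0, zero_mul, Matrix.det_mul, Matrix.det_transpose,
    Matrix.det_diagonal] at hdet
  exact mul_ne_zero (Matrix.det_vandermonde_ne_zero_iff.2 hd)
    (Finset.prod_ne_zero_iff.2 fun v _ => hyr v) hdet.symm

theorem det_krylovMat_diagonal_ne_zero [IsDomain R] {d : Fin n → R} (hd : Function.Injective d) :
    (krylovMat (Matrix.diagonal d) 1).det ≠ 0 := by
  have : krylovMat (Matrix.diagonal d) 1 = Matrix.vandermonde d := by
    ext v b
    simp [krylovMat, Matrix.diagonal_pow, Matrix.mulVec_diagonal, Matrix.vandermonde_apply]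
  rw [this]
  exact Matrix.det_vandermonde_ne_zero_iff.2 hd

end Hankel

section Tree

/-- In a digraph in which every vertex reaches `r`, there is a spanning in-tree
rooted at `r`, given by a parent map that strictly decreases a depth function. -/
theorem exists_parent {V : Type*} {E : V → V → Prop} {r : V}
    (h : ∀ v, Relation.ReflTransGen E v r) :
    ∃ (p : V → V) (depth : V → ℕ), ∀ v, v ≠ r → E v (p v) ∧ depth (p v) < depth v := by
  classical
  let reach : ℕ → V → Prop := fun k =>
    Nat.rec (motive := fun _ => V → Prop) (fun v => v = r) (fun _ P v => ∃ w, E v w ∧ P w) k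
  have hreach : ∀ v, ∃ k, reach k v := fun v => by
    induction h v using Relation.ReflTransGen.head_induction_on with
    | refl => exact ⟨0, rfl⟩
    | head hab _ ih =>
      obtain ⟨k, hk⟩ := ih
      exact ⟨k + 1, _, hab, hk⟩
  let depth : V → ℕ := fun v => Nat.find (hreach v)
  have hstep : ∀ v, ∃ w, v ≠ r → E v w ∧ depth w < depth v := fun v => by
    have hv : reach (depth v) v := Nat.find_spec (hreach v)
    cases hm : depth v with
    | zero =>
      rw [hm] at hv
      exact ⟨v, fun hne => absurd hv hne⟩
    | succ k =>
      rw [hm] at hv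
      obtain ⟨w, hw, hk⟩ := hv
      exact ⟨w, fun _ => ⟨hw, Nat.lt_succ_of_le (Nat.find_min' (hreach w) hk)⟩⟩
  choose p hp using hstep
  exact ⟨p, depth, hp⟩

variable {n : ℕ} {F : Type*} [Field F]

/-- For a matrix acting on basis vectors along a rooted in-tree with diagonal `d`, the equation
`(c - A) z = e_u` is solvable with `z r ≠ 0` when `c` avoids the diagonal up to the depth of `u`. -/
theorem exists_resolvent_of_tree {A : Matrix (Fin n) (Fin n) F} {r : Fin n} {d : Fin n → F}
    {p : Fin n → Fin n} {depth : Fin n → ℕ} (hdepth : ∀ v, v ≠ r → depth (p v) < depth v)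
    (hroot : A *ᵥ Pi.single r 1 = d r • Pi.single r 1)
    (htree : ∀ v, v ≠ r → A *ᵥ Pi.single v 1 = d v • Pi.single v 1 + Pi.single (p v) 1)
    (c : F) (k : ℕ) (u : Fin n) (hu : depth u = k) (hc : ∀ w, depth w ≤ depth u → c ≠ d w) :
    ∃ z : Fin n → F, A *ᵥ z = c • z - Pi.single u 1 ∧ z r ≠ 0 := by
  induction k using Nat.strong_induction_on generalizing u with
  | _ k ih =>
    have hne : c - d u ≠ 0 := sub_ne_zero.2 (hc u le_rfl)
    by_cases hur : u = r
    · subst hur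
      refine ⟨(c - d u)⁻¹ • Pi.single u 1, ?_, by simpa using hne⟩
      rw [Matrix.mulVec_smul, hroot]
      ext i
      simp only [Pi.smul_apply, Pi.sub_apply, smul_eq_mul]
      field_simp
      ring
    · have hlt := hdepth u hur
      obtain ⟨z, hz, hzr⟩ := ih (depth (p u)) (hu ▸ hlt) (p u) rfl
        fun w hw => hc w (hw.trans hlt.le)
      refine ⟨(c - d u)⁻¹ • (Pi.single u 1 + z), ?_, ?_⟩
      · rw [Matrix.mulVec_smul, Matrix.mulVec_add, htree u hur, hz]
        ext i
        simp only [Pi.smul_apply, Pi.sub_apply, Pi.add_apply, smul_eq_mul]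
        field_simp
        ring
      · simpa [Pi.single_eq_of_ne' hur] using ⟨hne, hzr⟩

theorem exists_eigenvector_of_tree {A : Matrix (Fin n) (Fin n) F} {r : Fin n} {d : Fin n → F}
    {p : Fin n → Fin n} {depth : Fin n → ℕ} (hd : Function.Injective d)
    (hdepth : ∀ v, v ≠ r → depth (p v) < depth v)
    (hroot : A *ᵥ Pi.single r 1 = d r • Pi.single r 1)
    (htree : ∀ v, v ≠ r → A *ᵥ Pi.single v 1 = d v • Pi.single v 1 + Pi.single (p v) 1)
    (v : Fin n) : ∃ y : Fin n → F, A *ᵥ y = d v • y ∧ y r ≠ 0 := by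
  by_cases hvr : v = r
  · subst hvr
    exact ⟨Pi.single v 1, hroot, by simp⟩
  · have hlt := hdepth v hvr
    obtain ⟨z, hz, hzr⟩ := exists_resolvent_of_tree hdepth hroot htree (d v) _ (p v) rfl
      fun w hw he => by
        obtain rfl := hd he
        exact absurd hw hlt.not_ge
    refine ⟨Pi.single v 1 + z, ?_, by simpa [Pi.single_eq_of_ne' hvr] using hzr⟩
    rw [Matrix.mulVec_add, htree v hvr, hz, smul_add]
    abel

variable (E : Fin n → Fin n → Prop) [DecidableRel E]

theorem exists_det_obsMat_graphMat_ne_zero {r : Fin n}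
    (hconn : ∀ v, Relation.ReflTransGen E v r) (hloop : ∀ v, E v v) {d : Fin n → F}
    (hd : Function.Injective d) :
    ∃ w : _ → F, (obsMat (graphMat E w) r).det ≠ 0 := by
  obtain ⟨p, depth, hp⟩ := exists_parent hconn
  have hpne : ∀ v, v ≠ r → p v ≠ v := fun v hv he => by
    have := (hp v hv).2
    rw [he] at this
    exact lt_irrefl _ this
  refine ⟨fun e => if e.1.1 = e.1.2 then d e.1.1 else if e.1.1 ≠ r ∧ e.1.2 = p e.1.1 then 1 else 0,
    det_obsMat_ne_zero hd (exists_eigenvector_of_tree hd (fun v hv => (hp v hv).2) ?_ ?_)⟩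
  · ext u
    rw [Matrix.mulVec_single_one]
    by_cases hu : u = r
    · subst hu
      simp [graphMat, hloop]
    · simp [graphMat, hu, Ne.symm hu]
  · intro v hv
    ext u
    rw [Matrix.mulVec_single_one]
    by_cases hu : u = v
    · subst hu
      simp [graphMat, hloop, (hpne u hv).symm]
    · by_cases hup : u = p v
      · subst hup
        simp [graphMat, hv, hu, Ne.symm hu, (hp v hv).1]
      · simp [graphMat, hu, Ne.symm hu, hup]

theorem exists_graphMat_eq_diagonal (hloop : ∀ v, E v v) (d : Fin n → F) :
    ∃ w, graphMat E w = Matrix.diagonal d := by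
  refine ⟨fun e => if e.1.1 = e.1.2 then d e.1.1 else 0, ?_⟩
  ext u v
  by_cases huv : u = v
  · subst huv
    simp [graphMat, hloop]
  · simp [graphMat, huv, Ne.symm huv]

end Tree

section Polynomial

open MvPolynomial

theorem totalDegree_pow_mulVec_le {n : ℕ} {σ R : Type*} [CommRing R]
    {A : Matrix (Fin n) (Fin n) (MvPolynomial σ R)} {x : Fin n → MvPolynomial σ R}
    (hA : ∀ i j, (A i j).totalDegree ≤ 1) (hx : ∀ i, (x i).totalDegree ≤ 1) (k : ℕ) (i : Fin n) :
    ((A ^ k *ᵥ x) i).totalDegree ≤ k + 1 := by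
  induction k generalizing i with
  | zero => simpa using hx i
  | succ k ih =>
    rw [pow_succ', ← Matrix.mulVec_mulVec]
    refine totalDegree_finsetSum_le fun j _ => (totalDegree_mul _ _).trans ?_
    have h₁ := hA i j
    have h₂ := ih j
    lia

theorem totalDegree_det_hankelMat_le {n : ℕ} {σ R : Type*} [CommRing R]
    {A : Matrix (Fin n) (Fin n) (MvPolynomial σ R)} {x : Fin n → MvPolynomial σ R}
    (hA : ∀ i j, (A i j).totalDegree ≤ 1) (hx : ∀ i, (x i).totalDegree ≤ 1) (r : Fin n) :
    (hankelMat A x r).det.totalDegree ≤ n ^ 2 := by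
  rw [Matrix.det_apply]
  refine totalDegree_finsetSum_le fun τ _ => ?_
  have hsum : ∑ a : Fin n, ((τ a : ℕ) + (a : ℕ) + 1) = n ^ 2 := by
    rw [Finset.sum_add_distrib, Finset.sum_add_distrib, Equiv.sum_comp τ (fun a => (a : ℕ)),
      Fin.sum_univ_eq_sum_range (fun i => i) n, ← mul_two, Finset.sum_range_id_mul_two]
    cases n with
    | zero => simp
    | succ m => simp; ring
  rw [← hsum]
  refine (totalDegree_smul_le _ _).trans ((totalDegree_finsetProd _ _).trans ?_)
  exact Finset.sum_le_sum fun a _ => totalDegree_pow_mulVec_le hA hx _ r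

/-- The **Schwartz-Zippel lemma** over a finite field, for an arbitrary finite set of variables,
as a lower bound on the number of non-zeros. -/
theorem one_sub_totalDegree_div_card_le {σ F : Type*} [Fintype σ] [DecidableEq σ] [Field F]
    [Fintype F] [DecidableEq F] {P : MvPolynomial σ F} (hP : P ≠ 0) :
    1 - (P.totalDegree : ℝ) / Fintype.card F ≤
      ((Finset.univ.filter fun f : σ → F => eval f P ≠ 0).card : ℝ) / Fintype.card (σ → F) := by
  let e := Fintype.equivFin σ
  have hQ : renameEquiv F e P ≠ 0 := 
    (map_ne_zero_iff _ (renameEquiv F e).injective).2 hP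
  have hsz := schwartz_zippel_totalDegree hQ (Finset.univ : Finset F)
  have hcard : (Finset.univ.filter fun f : σ → F => eval f P = 0).card =
      ((Fintype.piFinset fun _ => Finset.univ).filter
        fun f : Fin (Fintype.card σ) → F => eval f (renameEquiv F e P) = 0).card := by
    refine Finset.card_equiv (e.arrowCongr (Equiv.refl F)) fun f => ?_
    have : ((e.arrowCongr (Equiv.refl F)) f) ∘ e = f := by
      ext i
      simp
    simp [eval_rename, this]
  rw [← hcard, totalDegree_renameEquiv, Finset.card_univ] at hsz
  have hsz' : ((Finset.univ.filter fun f : σ → F => eval f P = 0).card : ℝ) /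
      (Fintype.card F : ℝ) ^ Fintype.card σ ≤ (P.totalDegree : ℝ) / Fintype.card F := by
    have hreal := (NNRat.cast_le (K := ℝ)).2 hsz
    push_cast at hreal
    exact hreal
  have hsplit := Finset.card_filter_add_card_filter_not (s := (Finset.univ : Finset (σ → F)))
    (fun f => eval f P = 0)
  rw [Finset.card_univ] at hsplit
  have hpos : (0 : ℝ) < Fintype.card (σ → F) := by
    exact_mod_cast Fintype.card_pos
  have hfun : (Fintype.card (σ → F) : ℝ) = (Fintype.card F : ℝ) ^ Fintype.card σ := by
    simp
  rw [← hfun] at hsz'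
  have hone : ((Finset.univ.filter fun f : σ → F => eval f P = 0).card : ℝ) /
      Fintype.card (σ → F) + ((Finset.univ.filter fun f : σ → F => eval f P ≠ 0).card : ℝ) /
      Fintype.card (σ → F) = 1 := by
    rw [← add_div, div_eq_one_iff_eq hpos.ne']
    exact_mod_cast hsplit
  linarith

variable {n : ℕ} (F : Type*) [Field F] (E : Fin n → Fin n → Prop)

/-- The vector whose entries are independent variables, distinct from those attached to the
edges of `E`. -/
noncomputable def genericVec : Fin n → MvPolynomial ({p : Fin n × Fin n // E p.1 p.2} ⊕ Fin n) F :=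
  fun i => X (Sum.inr i)

variable {F} in
theorem eval_comp_genericVec (w : {p : Fin n × Fin n // E p.1 p.2} → F) (x : Fin n → F) :
    eval (Sum.elim w x) ∘ genericVec F E = x := by
  ext i
  simp [genericVec]

variable [DecidableRel E]

/-- The matrix whose entries at the edges of `E` are independent variables. -/
noncomputable def genericGraphMat :
    Matrix (Fin n) (Fin n) (MvPolynomial ({p : Fin n × Fin n // E p.1 p.2} ⊕ Fin n) F) :=
  Matrix.of fun u v => if h : E v u then X (Sum.inl ⟨(v, u), h⟩) else 0

variable {F}

theorem genericGraphMat_map_eval (w : {p : Fin n × Fin n // E p.1 p.2} → F) (x : Fin n → F) :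
    (genericGraphMat F E).map (eval (Sum.elim w x)) = graphMat E w := by
  ext u v
  by_cases h : E v u <;> simp [genericGraphMat, graphMat, h]

theorem totalDegree_genericGraphMat_le (u v : Fin n) :
    (genericGraphMat F E u v).totalDegree ≤ 1 := by
  by_cases h : E v u <;> simp [genericGraphMat, h]

theorem det_hankelMat_generic_ne_zero {r : Fin n}
    (hconn : ∀ v, Relation.ReflTransGen E v r) (hloop : ∀ v, E v v) {d : Fin n → F}
    (hd : Function.Injective d) :
    (hankelMat (genericGraphMat F E) (genericVec F E) r).det ≠ 0 := by
  rw [hankelMat_eq_mul, Matrix.det_mul]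
  refine mul_ne_zero (fun h => ?_) (fun h => ?_)
  · obtain ⟨w, hw⟩ := exists_det_obsMat_graphMat_ne_zero E hconn hloop hd
    apply hw
    rw [← genericGraphMat_map_eval E w 0, ← map_det_obsMat, h, map_zero]
  · obtain ⟨w, hw⟩ := exists_graphMat_eq_diagonal E hloop d
    apply det_krylovMat_diagonal_ne_zero hd
    have hmap := map_det_krylovMat (eval (Sum.elim w 1)) (genericGraphMat F E) (genericVec F E)
    rwa [h, map_zero, genericGraphMat_map_eval, eval_comp_genericVec, hw, eq_comm] at hmap

end Polynomial

/-- For a strongly connected digraph with self-loops on `n` vertices, over a finite field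
with `q ≥ n²` elements, if the edge weights of `A` and the entries of `x` are i.i.d.
uniform, then for a fixed node `r` the probability (fraction of outcomes) that the
`n × n` Hankel matrix `(A^(a+b-2) x)_r` is invertible is at least `1 - n²/q`. -/
theorem hankel_invertible_prob {n : ℕ} {F : Type*} [Field F] [Fintype F] [DecidableEq F]
    (E : Fin n → Fin n → Prop) [DecidableRel E]
    (hconn : ∀ u v : Fin n, Relation.ReflTransGen E u v)
    (hloop : ∀ v : Fin n, E v v)
    (hq : n ^ 2 ≤ Fintype.card F) (r : Fin n) :
    1 - (n ^ 2 : ℝ) / Fintype.card F ≤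
      ((Finset.univ.filter fun ω : ({p : Fin n × Fin n // E p.1 p.2} → F) × (Fin n → F) =>
          (Matrix.det (Matrix.of fun a b : Fin n =>
            ((graphMat E ω.1 ^ ((a : ℕ) + (b : ℕ))) *ᵥ ω.2) r)) ≠ 0).card : ℝ)
        / Fintype.card (({p : Fin n × Fin n // E p.1 p.2} → F) × (Fin n → F)) := by
  have hle : Fintype.card (Fin n) ≤ Fintype.card F := by
    rw [Fintype.card_fin]
    exact (Nat.le_self_pow two_ne_zero n).trans hq
  obtain ⟨d⟩ := Function.Embedding.nonempty_of_card_le hle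
  have hP := det_hankelMat_generic_ne_zero E (fun v => hconn v r) hloop d.injective
  have hdeg := totalDegree_det_hankelMat_le (totalDegree_genericGraphMat_le (F := F) E)
    (x := genericVec F E) (fun i => (MvPolynomial.totalDegree_X _).le) r
  have hsz := one_sub_totalDegree_div_card_le hP
  have hcard : (Finset.univ.filter fun ω : ({p : Fin n × Fin n // E p.1 p.2} → F) × (Fin n → F) =>
      (Matrix.det (Matrix.of fun a b : Fin n =>
        ((graphMat E ω.1 ^ ((a : ℕ) + (b : ℕ))) *ᵥ ω.2) r)) ≠ 0).card =
      (Finset.univ.filter fun f : ({p : Fin n × Fin n // E p.1 p.2} ⊕ Fin n) → F =>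
        MvPolynomial.eval f (hankelMat (genericGraphMat F E) (genericVec F E) r).det ≠ 0).card := by
    refine Finset.card_equiv (Equiv.sumArrowEquivProdArrow _ _ _).symm fun ω => ?_
    have hω : (Equiv.sumArrowEquivProdArrow _ _ _).symm ω = Sum.elim ω.1 ω.2 := rfl
    simp only [Finset.mem_filter_univ]
    rw [hω, map_det_hankelMat, genericGraphMat_map_eval, eval_comp_genericVec]
    rfl
  rw [hcard, ← Fintype.card_congr (Equiv.sumArrowEquivProdArrow _ _ F)]
  refine le_trans ?_ hsz
  gcongr
  exact_mod_cast hdeg
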